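/- Let A, B ∈ ℚ and let f(z) = z³ + Az + B, viewed as a polynomial map ℂ → ℂ. If f is post-critically finite (every z ∈ ℂ with 3z² + A = 0 has finite forward orbit under f), then 4A ∈ ℤ, 8B ∈ ℤ, |A| ≤ 3^{3/2}, and |B| ≤ 3^{9/4}. -/

import Mathlib

/-!
If `3c² + A = 0`, the critical values of `f(z) = z³ + Az + B` are `B ∓ 2c³`, and some critical value
`w` is at least as large as both `B` and `c³`, up to powers of `2`. With respect to any absolute
value, a point that is large compared with the coefficients `A = -3c²` and `B` escapes, so `w` is
also bounded above in terms of `c` and `B`.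

Over `ℂ` the two estimates combine to `4‖c‖⁶ + ‖B‖² ≤ ‖w‖² ≤ 2 + 3‖c‖²`, which gives `‖A‖ ≤ 4` and
`‖B‖ ≤ 4`. For a Krull valuation `v` they give `v (2w) ≤ 1`, hence `v (4A) ≤ 1` and `v (8B) ≤ 1`.
Since the elements of a field that are integral over `ℤ` are those lying in all of its valuation
rings, `4A` and `8B` are algebraic integers.
-/

namespace PCF

/-- The map `z ↦ z³ + az + b`. -/
def cubic {R : Type*} [CommRing R] (a b z : R) : R := z ^ 3 + a * z + b

/-- Finiteness of the forward orbit `{fⁿ(x) : n ≥ 0}`. -/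
def HasFiniteOrbit {X : Type*} (f : X → X) (x : X) : Prop :=
  (Set.range fun n : ℕ => f^[n] x).Finite

/-- Post-critical finiteness of `z ↦ z³ + az + b`, tested on the critical points lying in `R`. It is
the usual notion when `R` is an algebraically closed field of characteristic zero. -/
def IsPostcriticallyFinite {R : Type*} [CommRing R] (a b : R) : Prop :=
  ∀ c : R, 3 * c ^ 2 + a = 0 → HasFiniteOrbit (cubic a b) c

section Orbit

variable {X ι : Type*} {f : X → X} {x : X}

theorem HasFiniteOrbit.apply (h : HasFiniteOrbit f x) : HasFiniteOrbit f (f x) := by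
  refine h.subset ?_
  rintro _ ⟨n, rfl⟩
  exact ⟨n + 1, Function.iterate_succ_apply f n x⟩

theorem not_hasFiniteOrbit_of_lt_apply [Preorder ι] (N : X → ι) {S : Set ι} (hS : IsUpperSet S)
    (hlt : ∀ y, N y ∈ S → N y < N (f y)) (hx : N x ∈ S) : ¬ HasFiniteOrbit f x := by
  have hmem (n : ℕ) : N (f^[n] x) ∈ S := by
    induction n with
    | zero => exact hx
    | succ n ih =>
      rw [Function.iterate_succ_apply']
      exact hS (hlt _ ih).le ih
  have hmono : StrictMono fun n : ℕ => N (f^[n] x) := strictMono_nat_of_lt_succ fun n => by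
    rw [Function.iterate_succ_apply']
    exact hlt _ (hmem n)
  exact Set.infinite_range_of_injective (hmono.injective.of_comp (f := N))

end Orbit

theorem IsPostcriticallyFinite.hasFiniteOrbit_criticalValue {R : Type*} [CommRing R] {a b c : R}
    (h : IsPostcriticallyFinite a b) (hc : 3 * c ^ 2 + a = 0) :
    HasFiniteOrbit (cubic a b) (b - 2 * c ^ 3) ∧ HasFiniteOrbit (cubic a b) (b + 2 * c ^ 3) := by
  have hvalue : cubic a b c = b - 2 * c ^ 3 := by
    unfold cubic
    linear_combination c * hc
  have hvalue_neg : cubic a b (-c) = b + 2 * c ^ 3 := by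
    unfold cubic
    linear_combination -c * hc
  exact ⟨hvalue ▸ (h c hc).apply, hvalue_neg ▸ (h (-c) (by rwa [neg_sq])).apply⟩

section Archimedean

theorem norm_lt_norm_cubic {K : Type*} [NormedField K] {a b z : K} (hbz : ‖b‖ ≤ ‖z‖)
    (haz : 2 + ‖a‖ < ‖z‖ ^ 2) : ‖z‖ < ‖cubic a b z‖ := by
  have hz : 0 < ‖z‖ := by
    by_contra! hz
    nlinarith [norm_nonneg z, norm_nonneg a]
  have hcube : ‖z‖ ^ 3 ≤ ‖cubic a b z‖ + ‖a‖ * ‖z‖ + ‖b‖ := by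
    rw [← norm_pow, ← norm_mul]
    calc ‖z ^ 3‖ = ‖cubic a b z - a * z - b‖ := by unfold cubic; ring_nf
      _ ≤ ‖cubic a b z‖ + ‖a * z‖ + ‖b‖ :=
        (norm_sub_le _ _).trans (by gcongr; exact norm_sub_le _ _)
  nlinarith [mul_lt_mul_of_pos_right haz hz]

theorem norm_sq_le_of_hasFiniteOrbit {K : Type*} [NormedField K] {a b w : K}
    (hw : HasFiniteOrbit (cubic a b) w) (hbw : ‖b‖ ≤ ‖w‖) : ‖w‖ ^ 2 ≤ 2 + ‖a‖ := by
  by_contra! haw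
  have hupper : IsUpperSet {r : ℝ | ‖b‖ ≤ r ∧ 2 + ‖a‖ < r ^ 2} := fun r s hrs ⟨hbr, har⟩ =>
    ⟨hbr.trans hrs, har.trans_le (pow_le_pow_left₀ ((norm_nonneg b).trans hbr) hrs 2)⟩
  exact not_hasFiniteOrbit_of_lt_apply norm hupper
    (fun z hz => norm_lt_norm_cubic hz.1 hz.2) ⟨hbw, haw⟩ hw

variable {𝕜 : Type*} [RCLike 𝕜] {a b c : 𝕜}

theorem IsPostcriticallyFinite.exists_hasFiniteOrbit_norm_sq_ge (h : IsPostcriticallyFinite a b)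
    (hc : 3 * c ^ 2 + a = 0) :
    ∃ w, HasFiniteOrbit (cubic a b) w ∧ ‖b‖ ^ 2 + 4 * ‖c‖ ^ 6 ≤ ‖w‖ ^ 2 := by
  obtain ⟨hsub, hadd⟩ := h.hasFiniteOrbit_criticalValue hc
  have hparallelogram : ‖b + 2 * c ^ 3‖ ^ 2 + ‖b - 2 * c ^ 3‖ ^ 2 =
      2 * (‖b‖ ^ 2 + 4 * ‖c‖ ^ 6) := by
    rw [parallelogram_law_with_norm 𝕜, norm_mul, norm_pow, RCLike.norm_ofNat]
    ring
  rcases le_total (‖b + 2 * c ^ 3‖ ^ 2) (‖b - 2 * c ^ 3‖ ^ 2) with hle | hle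
  · exact ⟨_, hsub, by linarith⟩
  · exact ⟨_, hadd, by linarith⟩

theorem IsPostcriticallyFinite.norm_le_four (h : IsPostcriticallyFinite a b)
    (hc : 3 * c ^ 2 + a = 0) : ‖a‖ ≤ 4 ∧ ‖b‖ ≤ 4 := by
  obtain ⟨w, hw, hlower⟩ := h.exists_hasFiniteOrbit_norm_sq_ge hc
  have hnorm_a : ‖a‖ = 3 * ‖c‖ ^ 2 := by
    rw [← neg_eq_of_add_eq_zero_right hc, norm_neg, norm_mul, norm_pow, RCLike.norm_ofNat]
  have hbw : ‖b‖ ≤ ‖w‖ := by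
    refine le_of_sq_le_sq ?_ (norm_nonneg w)
    linarith [pow_nonneg (norm_nonneg c) 6]
  have hcombined : ‖b‖ ^ 2 + 4 * (‖c‖ ^ 2) ^ 3 ≤ 2 + 3 * ‖c‖ ^ 2 := by
    linarith [norm_sq_le_of_hasFiniteOrbit hw hbw]
  have hc_sq : ‖c‖ ^ 2 ≤ 4 / 3 := by
    by_contra! hlarge
    nlinarith [sq_nonneg ‖b‖, pow_lt_pow_left₀ hlarge (by norm_num) two_ne_zero]
  exact ⟨by linarith, by nlinarith [pow_nonneg (sq_nonneg ‖c‖) 3]⟩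

end Archimedean

section Valuation

variable {R Γ₀ : Type*} [CommRing R] [LinearOrderedCommGroupWithZero Γ₀] (v : Valuation R Γ₀)
  {a b c w : R}

theorem valuation_ofNat_le_one (n : ℕ) [n.AtLeastTwo] : v (OfNat.ofNat n) ≤ 1 :=
  (v.mem_integer_iff _).mp (ofNat_mem v.integer n)

theorem valuation_cubic {z : R} (haz : v a < v z ^ 2) (hbz : v b < v z ^ 3) :
    v (cubic a b z) = v z ^ 3 := by
  have hz : 0 < v z := by
    by_contra! hz
    simp [le_zero_iff.mp hz] at haz
  rw [cubic, add_assoc, v.map_add_eq_of_lt_left, map_pow]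
  rw [map_pow]
  refine v.map_add_lt ?_ hbz
  calc v (a * z) = v a * v z := map_mul v a z
    _ < v z ^ 2 * v z := by gcongr
    _ = v z ^ 3 := (pow_succ _ 2).symm

theorem valuation_le_of_hasFiniteOrbit (hw : HasFiniteOrbit (cubic a b) w) :
    v w ≤ 1 ∨ v w ^ 2 ≤ v a ∨ v w ^ 3 ≤ v b := by
  by_contra! hlarge
  have hupper : IsUpperSet {r : Γ₀ | 1 < r ∧ v a < r ^ 2 ∧ v b < r ^ 3} :=
    fun r s hrs ⟨h1, ha, hb⟩ =>
      ⟨h1.trans_le hrs, ha.trans_le (by gcongr), hb.trans_le (by gcongr)⟩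
  refine not_hasFiniteOrbit_of_lt_apply v hupper (fun z ⟨h1, ha, hb⟩ => ?_) hlarge hw
  rw [valuation_cubic v ha hb]
  exact lt_self_pow₀ h1 (by norm_num)

theorem IsPostcriticallyFinite.exists_hasFiniteOrbit_valuation_ge (h : IsPostcriticallyFinite a b)
    (hc : 3 * c ^ 2 + a = 0) :
    ∃ w, HasFiniteOrbit (cubic a b) w ∧ v (2 * b) ≤ v w ∧ v (4 * c ^ 3) ≤ v w := by
  obtain ⟨hsub, hadd⟩ := h.hasFiniteOrbit_criticalValue hc
  have hsum : v (2 * b) ≤ max (v (b + 2 * c ^ 3)) (v (b - 2 * c ^ 3)) := by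
    rw [show 2 * b = (b + 2 * c ^ 3) + (b - 2 * c ^ 3) by ring]
    exact v.map_add _ _
  have hdiff : v (4 * c ^ 3) ≤ max (v (b + 2 * c ^ 3)) (v (b - 2 * c ^ 3)) := by
    rw [show 4 * c ^ 3 = (b + 2 * c ^ 3) - (b - 2 * c ^ 3) by ring]
    exact v.map_sub _ _
  rcases max_choice (v (b + 2 * c ^ 3)) (v (b - 2 * c ^ 3)) with hmax | hmax <;>
    rw [hmax] at hsum hdiff
  · exact ⟨_, hadd, hsum, hdiff⟩
  · exact ⟨_, hsub, hsum, hdiff⟩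

theorem valuation_le_critical (hc : 3 * c ^ 2 + a = 0) (haw : v w ^ 2 ≤ v a) : v w ≤ v c := by
  refine le_of_pow_le_pow_left₀ two_ne_zero zero_le (haw.trans ?_)
  rw [← neg_eq_of_add_eq_zero_right hc, v.map_neg, map_mul, map_pow]
  exact mul_le_of_le_one_left' (valuation_ofNat_le_one v 3)

theorem valuation_two_mul_le_one (hw : HasFiniteOrbit (cubic a b) w) (hc : 3 * c ^ 2 + a = 0)
    (hbw : v (2 * b) ≤ v w) (hcw : v (4 * c ^ 3) ≤ v w) : v (2 * w) ≤ 1 := by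
  have htwo := valuation_ofNat_le_one v 2
  rcases eq_zero_or_pos (v w) with hw0 | hvw
  · simp [hw0]
  rcases valuation_le_of_hasFiniteOrbit v hw with hw1 | haw | hbw'
  · rw [map_mul]
    exact mul_le_one' htwo hw1
  · have hwc := valuation_le_critical v hc haw
    have hcancel : v (2 * c) ^ 2 ≤ 1 := by
      refine le_of_mul_le_mul_right (a := v c) ?_ (hvw.trans_le hwc)
      calc v (2 * c) ^ 2 * v c = v (4 * c ^ 3) := by
            rw [← map_pow, ← map_mul]
            ring_nf
        _ ≤ 1 * v c := by rw [one_mul]; exact hcw.trans hwc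
    calc v (2 * w) ≤ v (2 * c) := by rw [map_mul, map_mul]; gcongr
      _ ≤ 1 := (pow_le_one_iff_of_nonneg zero_le two_ne_zero).mp hcancel
  · have hcancel : v 2 * v w ^ 2 ≤ 1 := by
      refine le_of_mul_le_mul_right (a := v w) ?_ hvw
      calc v 2 * v w ^ 2 * v w = v 2 * v w ^ 3 := by rw [mul_assoc, ← pow_succ]
        _ ≤ v 2 * v b := by gcongr
        _ ≤ 1 * v w := by rwa [← map_mul, one_mul]
    refine (pow_le_one_iff_of_nonneg zero_le two_ne_zero).mp ?_
    calc v (2 * w) ^ 2 = v 2 * (v 2 * v w ^ 2) := by rw [map_mul, mul_pow, sq (v 2), mul_assoc]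
      _ ≤ 1 := mul_le_one' htwo hcancel

theorem IsPostcriticallyFinite.valuation_le_one (h : IsPostcriticallyFinite a b)
    (hc : 3 * c ^ 2 + a = 0) : v (4 * a) ≤ 1 ∧ v (8 * b) ≤ 1 := by
  obtain ⟨w, hw, hbw, hcw⟩ := h.exists_hasFiniteOrbit_valuation_ge v hc
  have h2w := valuation_two_mul_le_one v hw hc hbw hcw
  have h2c : v (2 * c) ≤ 1 := by
    refine (pow_le_one_iff_of_nonneg zero_le three_ne_zero).mp ?_
    calc v (2 * c) ^ 3 = v 2 * v (4 * c ^ 3) := by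
          rw [← map_pow, ← map_mul]
          ring_nf
      _ ≤ v 2 * v w := by gcongr
      _ ≤ 1 := by rwa [← map_mul]
  constructor
  · calc v (4 * a) = v 3 * v (2 * c) ^ 2 := by
          rw [← map_pow, ← map_mul, ← v.map_neg (4 * a)]
          congr 1
          linear_combination -4 * hc
      _ ≤ 1 := mul_le_one' (valuation_ofNat_le_one v 3) (pow_le_one' h2c 2)
  · calc v (8 * b) = v 2 * (v 2 * v (2 * b)) := by
          rw [← map_mul, ← map_mul]
          ring_nf
      _ ≤ v 2 * (v 2 * v w) := by gcongr
      _ ≤ 1 := mul_le_one' (valuation_ofNat_le_one v 2) (by rwa [← map_mul])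

end Valuation

section Integrality

theorem isIntegral_of_forall_mem_valuationSubring {R K : Type*} [CommRing R] [Field K]
    [Algebra R K] {x : K}
    (h : ∀ V : ValuationSubring K, (∀ r, algebraMap R K r ∈ V) → x ∈ V) : IsIntegral R x := by
  by_contra hx
  obtain ⟨V, hle, hxV⟩ := Subring.exists_le_valuationSubring_of_isIntegrallyClosedIn
    (R := (integralClosure R K).toSubring) hx
  exact hxV (h V fun r => hle ((integralClosure R K).algebraMap_mem r))

theorem IsPostcriticallyFinite.isIntegral {K : Type*} [Field K] {a b c : K}
    (h : IsPostcriticallyFinite a b) (hc : 3 * c ^ 2 + a = 0) :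
    IsIntegral ℤ (4 * a) ∧ IsIntegral ℤ (8 * b) := by
  have hmem (V : ValuationSubring K) : 4 * a ∈ V ∧ 8 * b ∈ V := by
    simpa only [V.valuation_le_one_iff] using h.valuation_le_one V.valuation hc
  exact ⟨isIntegral_of_forall_mem_valuationSubring fun V _ => (hmem V).1,
    isIntegral_of_forall_mem_valuationSubring fun V _ => (hmem V).2⟩

theorem exists_intCast_eq_of_isIntegral_ratCast {K : Type*} [DivisionRing K] [CharZero K] {q : ℚ}
    (hq : IsIntegral ℤ (q : K)) : ∃ n : ℤ, q = n :=
  (IsIntegral.ratCast_iff.mp hq).exists_int_iff_exists_rat.mp ⟨q, rfl⟩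

end Integrality

theorem four_le_three_rpow {s : ℝ} (hs : 3 / 2 ≤ s) : (4 : ℝ) ≤ 3 ^ s := by
  have hsq : ((3 : ℝ) ^ (3 / 2 : ℝ)) ^ 2 = 27 := by
    rw [← Real.rpow_mul_natCast (by norm_num)]
    norm_num
  calc (4 : ℝ) ≤ 3 ^ (3 / 2 : ℝ) := le_of_sq_le_sq (by rw [hsq]; norm_num) (by positivity)
    _ ≤ 3 ^ s := Real.rpow_le_rpow_of_exponent_le (by norm_num) hs

theorem rational_pcf_cubic_bounds_general {A B : ℂ} (hpcf : IsPostcriticallyFinite A B) :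
    IsIntegral ℤ (4 * A) ∧ IsIntegral ℤ (8 * B) ∧ ‖A‖ ≤ 4 ∧ ‖B‖ ≤ 4 := by
  obtain ⟨c, hc_sq⟩ := IsAlgClosed.exists_pow_nat_eq (-A / 3) two_pos
  have hc : 3 * c ^ 2 + A = 0 := by rw [hc_sq]; ring
  obtain ⟨hA_int, hB_int⟩ := hpcf.isIntegral hc
  exact ⟨hA_int, hB_int, hpcf.norm_le_four hc⟩

/-- If `A, B ∈ ℚ` and `f(z) = z³ + Az + B` is post-critically finite as
a map `ℂ → ℂ` (every root of `3z² + A` has finite forward orbit), then `4A` and `8B` are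
integers, `|A| ≤ 3^{3/2}` and `|B| ≤ 3^{9/4}`. -/
theorem rational_pcf_cubic_bounds (A B : ℚ)
    (hpcf : ∀ z : ℂ, 3 * z ^ 2 + (A : ℂ) = 0 →
      (Set.range fun n : ℕ => (fun w : ℂ => w ^ 3 + (A : ℂ) * w + (B : ℂ))^[n] z).Finite) :
    (∃ a : ℤ, 4 * A = (a : ℚ)) ∧ (∃ b : ℤ, 8 * B = (b : ℚ)) ∧
      (|A| : ℝ) ≤ (3 : ℝ) ^ ((3 : ℝ) / 2) ∧ (|B| : ℝ) ≤ (3 : ℝ) ^ ((9 : ℝ) / 4) := by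
  obtain ⟨hA_int, hB_int, hA, hB⟩ := rational_pcf_cubic_bounds_general hpcf
  rw [Complex.norm_ratCast] at hA hB
  exact ⟨exists_intCast_eq_of_isIntegral_ratCast (K := ℂ) (by exact_mod_cast hA_int),
    exists_intCast_eq_of_isIntegral_ratCast (K := ℂ) (by exact_mod_cast hB_int),
    hA.trans (four_le_three_rpow (by norm_num)), hB.trans (four_le_three_rpow (by norm_num))⟩

end PCF
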